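/- arXiv:math/0112309 — 2 statements merged into one kernel-verified Lean document; each statement's English description precedes it below -/
import Mathlib

section
/- The map π is involutive: for every Φ ∈ S^c and all square-integrable ξ, η : ℝ × [0,1) × ℤ → ℂ, the inner product identity ⟨π(Φ*)ξ, η⟩ = ⟨ξ, π(Φ)η⟩ holds, i.e. π(Φ*) is the adjoint of π(Φ) on L²(ℝ × [0,1) × ℤ). -/
/-!
On a fixed fibre `(x, y)` the operator `π(Φ)` is the matrix with entries
`K p r = Φ(x + ℏ(p + r)μ, y + ℏ(p + r)ν, p - r)`. The shift of the arguments is symmetric in `p` and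
`r`, so replacing `Φ` by `Φ*` replaces this matrix by its conjugate transpose. When the sup norms of
the modes `Φ(·, ·, p)` are summable, `|K p r|` is dominated by a summable function of `p - r`, so
for square-summable `a`, `b` the double series `∑ K p r * a r * conj (b p)` converges absolutely
and its two orders of summation are the two sides of the adjoint relation. Almost every fibre of a
square-integrable function is square-summable.

For `Φ` in `S^c`, periodicity in `y` and quasi-periodicity in `x` make `|Φ(·, ·, p)|` doubly
periodic, so the decay in `p` on the unit square holds on the whole plane.
-/

open MeasureTheory ENNReal

noncomputable section

/-- Membership in the space `S^c` of Rieffel's quantum Heisenberg manifold. -/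
structure InSc (c : ℕ) (Φ : ℝ → ℝ → ℤ → ℂ) : Prop where
  smooth : ∀ p : ℤ, ContDiff ℝ (⊤ : ℕ∞) (fun xy : ℝ × ℝ => Φ xy.1 xy.2 p)
  periodic_y : ∀ (x y : ℝ) (p : ℤ), Φ x (y + 1) p = Φ x y p
  twisted : ∀ (k : ℤ) (x y : ℝ) (p : ℤ),
    Φ (x + k) y p = Complex.exp (2 * Real.pi * Complex.I * ((c : ℂ) * (k : ℂ) * (p : ℂ) * (y : ℂ))) * Φ x y p
  poly_bounded : ∀ (P : Polynomial ℤ) (m n : ℕ) (K : Set (ℝ × ℝ)), IsCompact K →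
    ∃ C : ℝ, ∀ (x y : ℝ) (p : ℤ), (x, y) ∈ K →
      |((P.eval p : ℤ) : ℝ)| * ‖iteratedDeriv m (fun x' => iteratedDeriv n (fun y' => Φ x' y' p) y) x‖ ≤ C

/-- The star product on `S^c`. -/
def starProd (hbar μ ν : ℝ) (Φ Ψ : ℝ → ℝ → ℤ → ℂ) : ℝ → ℝ → ℤ → ℂ :=
  fun x y p => ∑' q : ℤ,
    Φ (x - hbar * ((q - p : ℤ) : ℝ) * μ) (y - hbar * ((q - p : ℤ) : ℝ) * ν) q *
    Ψ (x - hbar * (q : ℝ) * μ) (y - hbar * (q : ℝ) * ν) (p - q)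

/-- The involution on `S^c`. -/
def invol (Φ : ℝ → ℝ → ℤ → ℂ) : ℝ → ℝ → ℤ → ℂ :=
  fun x y p => (starRingEnd ℂ) (Φ x y (-p))

/-- The norm `‖·‖_{∞,∞,1}`, valued in `ℝ≥0∞`. -/
def norm1 (Φ : ℝ → ℝ → ℤ → ℂ) : ℝ≥0∞ :=
  ∑' p : ℤ, ⨆ x : ℝ, ⨆ y : ℝ, (‖Φ x y p‖₊ : ℝ≥0∞)

/-- The representation `π` acting on functions on `ℝ × [0,1) × ℤ`. -/
def piRep (hbar μ ν : ℝ) (Φ ξ : ℝ → ℝ → ℤ → ℂ) : ℝ → ℝ → ℤ → ℂ :=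
  fun x y p => ∑' q : ℤ,
    Φ (x - hbar * ((q - 2 * p : ℤ) : ℝ) * μ) (y - hbar * ((q - 2 * p : ℤ) : ℝ) * ν) q *
    ξ x y (p - q)

/-- Square integrability (with measurability) on `ℝ × [0,1) × ℤ`. -/
def SqInt (ξ : ℝ → ℝ → ℤ → ℂ) : Prop :=
  (∀ p : ℤ, Measurable (fun xy : ℝ × ℝ => ξ xy.1 xy.2 p)) ∧
  (∫⁻ x : ℝ, ∫⁻ y in Set.Ico (0:ℝ) 1, ∑' p : ℤ, ((‖ξ x y p‖₊ : ℝ≥0∞)) ^ 2) < ⊤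

/-- The `L²` norm on `ℝ × [0,1) × ℤ`, valued in `ℝ≥0∞`. -/
def l2norm (ξ : ℝ → ℝ → ℤ → ℂ) : ℝ≥0∞ :=
  (∫⁻ x : ℝ, ∫⁻ y in Set.Ico (0:ℝ) 1, ∑' p : ℤ, ((‖ξ x y p‖₊ : ℝ≥0∞)) ^ 2) ^ (1/2 : ℝ)

/-- The inner product on `L²(ℝ × [0,1) × ℤ)`. -/
def ip (ξ η : ℝ → ℝ → ℤ → ℂ) : ℂ :=
  ∫ x : ℝ, ∫ y in Set.Ico (0:ℝ) 1, ∑' p : ℤ, ξ x y p * (starRingEnd ℂ) (η x y p)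

/-- The action of the Heisenberg group. -/
def Lact (c : ℕ) (r s t : ℝ) (Φ : ℝ → ℝ → ℤ → ℂ) : ℝ → ℝ → ℤ → ℂ :=
  fun x y p => Complex.exp (2 * Real.pi * Complex.I *
    ((p : ℂ) * ((t : ℂ) + (c : ℂ) * (s : ℂ) * ((x : ℂ) - (r : ℂ))))) * Φ (x - r) (y - s) p

/-- The trace `τ`. -/
def tr (Φ : ℝ → ℝ → ℤ → ℂ) : ℂ :=
  ∫ x in (0:ℝ)..1, ∫ y in (0:ℝ)..1, Φ x y 0

/-- The zero mode `Φ⁽⁰⁾`. -/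
def zeroMode (Φ : ℝ → ℝ → ℤ → ℂ) : ℝ → ℝ → ℤ → ℂ :=
  fun x y p => if p = 0 then Φ x y 0 else 0

/-- The derivation `δ₁`. -/
def d1 (Φ : ℝ → ℝ → ℤ → ℂ) : ℝ → ℝ → ℤ → ℂ :=
  fun x y p => -(deriv (fun x' => Φ x' y p) x)

/-- The derivation `δ₂`. -/
def d2 (c : ℕ) (Φ : ℝ → ℝ → ℤ → ℂ) : ℝ → ℝ → ℤ → ℂ :=
  fun x y p => 2 * Real.pi * Complex.I * (c : ℂ) * (p : ℂ) * (x : ℂ) * Φ x y p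
    - deriv (fun y' => Φ x y' p) y

/-- The derivation `δ₃`. -/
def d3 (Φ : ℝ → ℝ → ℤ → ℂ) : ℝ → ℝ → ℤ → ℂ :=
  fun x y p => 2 * Real.pi * Complex.I * (p : ℂ) * Φ x y p


section Matrix

variable {𝕜 G R : Type*} [RCLike 𝕜] [AddGroup G] [NormedRing R] [CompleteSpace R]

lemma summable_mul_sub_snd {f g : G → R}
    (hf : Summable fun p => ‖f p‖) (hg : Summable fun p => ‖g p‖) :
    Summable fun z : G × G => f (z.1 - z.2) * g z.2 := by
  let shear : G × G ≃ G × G :=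
    ⟨fun z => (z.1 - z.2, z.2), fun z => (z.1 + z.2, z.2), fun z => by simp, fun z => by simp⟩
  exact shear.summable_iff.mpr (summable_mul_of_summable_norm hf hg)

lemma summable_mul_sub_fst {f g : G → R}
    (hf : Summable fun p => ‖f p‖) (hg : Summable fun p => ‖g p‖) :
    Summable fun z : G × G => f (z.1 - z.2) * g z.1 := by
  have hf_neg : Summable fun p => ‖f (-p)‖ := (Equiv.neg G).summable_iff.mpr hf
  have h := (Equiv.prodComm G G).summable_iff.mpr (summable_mul_sub_snd hf_neg hg)
  simpa only [Function.comp_def, Equiv.prodComm_apply, Prod.fst_swap, Prod.snd_swap, neg_sub]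
    using h

/-- The pairing is controlled as in Schur's test, by `|a r| |b p| ≤ |a r|² + |b p|²`. -/
lemma summable_matrix_pairing_of_norm_le_sub {K : G → G → 𝕜} {M : G → ℝ}
    (hM : Summable M) (hK : ∀ p r, ‖K p r‖ ≤ M (p - r)) {a b : G → 𝕜}
    (ha : Summable fun r => ‖a r‖ ^ 2) (hb : Summable fun p => ‖b p‖ ^ 2) :
    Summable fun z : G × G => K z.1 z.2 * a z.2 * (starRingEnd 𝕜) (b z.1) := by
  refine ((summable_mul_sub_snd hM.norm ha.norm).add
    (summable_mul_sub_fst hM.norm hb.norm)).of_norm_bounded fun ⟨p, r⟩ => ?_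
  have amgm : ‖a r‖ * ‖b p‖ ≤ ‖a r‖ ^ 2 + ‖b p‖ ^ 2 := by
    nlinarith only [two_mul_le_add_sq ‖a r‖ ‖b p‖, sq_nonneg ‖a r‖, sq_nonneg ‖b p‖]
  calc ‖K p r * a r * (starRingEnd 𝕜) (b p)‖
      = ‖K p r‖ * (‖a r‖ * ‖b p‖) := by rw [norm_mul, norm_mul, RCLike.norm_conj, mul_assoc]
    _ ≤ M (p - r) * (‖a r‖ ^ 2 + ‖b p‖ ^ 2) :=
        mul_le_mul (hK p r) amgm (by positivity) ((norm_nonneg _).trans (hK p r))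
    _ = M (p - r) * ‖a r‖ ^ 2 + M (p - r) * ‖b p‖ ^ 2 := mul_add _ _ _

lemma tsum_matrix_mul_conj_eq {ι κ : Type*} {K : ι → κ → 𝕜} {a : κ → 𝕜} {b : ι → 𝕜}
    (h : Summable fun z : ι × κ => K z.1 z.2 * a z.2 * (starRingEnd 𝕜) (b z.1)) :
    ∑' p, (∑' r, K p r * a r) * (starRingEnd 𝕜) (b p) =
      ∑' r, a r * (starRingEnd 𝕜) (∑' p, (starRingEnd 𝕜) (K p r) * b p) := by
  calc ∑' p, (∑' r, K p r * a r) * (starRingEnd 𝕜) (b p)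
      = ∑' p, ∑' r, K p r * a r * (starRingEnd 𝕜) (b p) := by simp only [tsum_mul_right]
    _ = ∑' r, ∑' p, K p r * a r * (starRingEnd 𝕜) (b p) := Summable.tsum_comm h.prod_symm
    _ = ∑' r, a r * (starRingEnd 𝕜) (∑' p, (starRingEnd 𝕜) (K p r) * b p) := by
        simp only [RCLike.conj_tsum, map_mul, RCLike.conj_conj, ← tsum_mul_left]
        exact tsum_congr fun r => tsum_congr fun p => by ring

end Matrix

lemma norm1_ne_top_iff_exists_summable {Φ : ℝ → ℝ → ℤ → ℂ} :
    norm1 Φ ≠ ⊤ ↔ ∃ M : ℤ → ℝ, Summable M ∧ ∀ x y p, ‖Φ x y p‖ ≤ M p := by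
  constructor
  · intro h
    refine ⟨fun p => (⨆ x, ⨆ y, (‖Φ x y p‖₊ : ℝ≥0∞)).toReal, ENNReal.summable_toReal h,
      fun x y p => ?_⟩
    have hle : (‖Φ x y p‖₊ : ℝ≥0∞) ≤ ⨆ x, ⨆ y, (‖Φ x y p‖₊ : ℝ≥0∞) :=
      le_iSup₂ (f := fun x y => (‖Φ x y p‖₊ : ℝ≥0∞)) x y
    simpa using ENNReal.toReal_mono (ENNReal.ne_top_of_tsum_ne_top h p) hle
  · rintro ⟨M, hM, hΦM⟩
    refine ne_top_of_le_ne_top hM.tsum_ofReal_ne_top (ENNReal.tsum_le_tsum fun p => ?_)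
    refine iSup₂_le fun x y => ?_
    rw [← enorm_eq_nnnorm, ← ofReal_norm]
    exact ENNReal.ofReal_le_ofReal (hΦM x y p)

/-- The functions `Φ` to which the representation `π` extends from `S^c`: those measurable in
`(x, y)` and of finite norm `‖·‖_{∞,∞,1}`. Measurability is included, as in `SqInt`, so that the
inner products involving `piRep hbar μ ν Φ η` are genuine integrals. -/
structure IsL1Symbol (Φ : ℝ → ℝ → ℤ → ℂ) : Prop where
  measurable : ∀ p : ℤ, Measurable fun xy : ℝ × ℝ => Φ xy.1 xy.2 p
  norm1_ne_top : norm1 Φ ≠ ⊤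

namespace InSc

variable {c : ℕ} {Φ : ℝ → ℝ → ℤ → ℂ}

lemma norm_fract_fract (hΦ : InSc c Φ) (x y : ℝ) (p : ℤ) :
    ‖Φ (Int.fract x) (Int.fract y) p‖ = ‖Φ x y p‖ := by
  have hy : Φ x (Int.fract y) p = Φ x y p := by
    have h : Function.Periodic (fun y => Φ x y p) 1 := fun y => hΦ.periodic_y x y p
    simpa only [mul_one, Int.self_sub_floor] using h.sub_int_mul_eq (x := y) ⌊y⌋
  have hx := hΦ.twisted ⌊x⌋ (Int.fract x) (Int.fract y) p
  rw [Int.fract_add_floor, hy] at hx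
  rw [hx, norm_mul, Complex.norm_exp]
  simp

lemma exists_abs_eval_mul_norm_le (hΦ : InSc c Φ) (P : Polynomial ℤ) :
    ∃ C : ℝ, ∀ x y p, |((P.eval p : ℤ) : ℝ)| * ‖Φ x y p‖ ≤ C := by
  obtain ⟨C, hC⟩ := hΦ.poly_bounded P 0 0 (Set.Icc (0 : ℝ) 1 ×ˢ Set.Icc (0 : ℝ) 1)
    (isCompact_Icc.prod isCompact_Icc)
  refine ⟨C, fun x y p => ?_⟩
  have mem_Icc (t : ℝ) : Int.fract t ∈ Set.Icc (0 : ℝ) 1 :=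
    ⟨Int.fract_nonneg t, (Int.fract_lt_one t).le⟩
  simpa only [iteratedDeriv_zero, hΦ.norm_fract_fract] using
    hC (Int.fract x) (Int.fract y) p ⟨mem_Icc x, mem_Icc y⟩

end InSc

lemma summable_int_inv_one_add_sq : Summable fun p : ℤ => (1 + (p : ℝ) ^ 2)⁻¹ := by
  have h : Summable fun p : ℤ => 1 / (p : ℝ) ^ 2 := Real.summable_one_div_int_pow.mpr one_lt_two
  refine h.of_norm_bounded_eventually ?_
  filter_upwards [(Set.finite_singleton (0 : ℤ)).compl_mem_cofinite] with p hp
  have hp0 : (p : ℝ) ≠ 0 := Int.cast_ne_zero.mpr hp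
  rw [Real.norm_of_nonneg (by positivity), ← one_div]
  exact one_div_le_one_div_of_le (by positivity) (by linarith)

lemma InSc.isL1Symbol {c : ℕ} {Φ : ℝ → ℝ → ℤ → ℂ} (hΦ : InSc c Φ) : IsL1Symbol Φ where
  measurable p := (hΦ.smooth p).continuous.measurable
  norm1_ne_top := by
    obtain ⟨C, hC⟩ := hΦ.exists_abs_eval_mul_norm_le (1 + Polynomial.X ^ 2)
    refine norm1_ne_top_iff_exists_summable.mpr
      ⟨fun p => C * (1 + (p : ℝ) ^ 2)⁻¹, summable_int_inv_one_add_sq.mul_left C, fun x y p => ?_⟩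
    have hpos : 0 < 1 + (p : ℝ) ^ 2 := by positivity
    have heval : |(((1 + Polynomial.X ^ 2 : Polynomial ℤ).eval p : ℤ) : ℝ)| = 1 + (p : ℝ) ^ 2 := by
      simp [abs_of_pos hpos]
    rw [le_mul_inv_iff₀' hpos, ← heval]
    exact hC x y p

section Fibre

variable (hbar μ ν : ℝ) (Φ : ℝ → ℝ → ℤ → ℂ)

/-- The matrix of `π(Φ)` on the fibre over `(x, y)`. -/
def piKernel (x y : ℝ) (p r : ℤ) : ℂ :=
  Φ (x + hbar * ((p + r : ℤ) : ℝ) * μ) (y + hbar * ((p + r : ℤ) : ℝ) * ν) (p - r)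

lemma piRep_eq_tsum_piKernel (ξ : ℝ → ℝ → ℤ → ℂ) (x y : ℝ) (p : ℤ) :
    piRep hbar μ ν Φ ξ x y p = ∑' r, piKernel hbar μ ν Φ x y p r * ξ x y r := by
  rw [← (Equiv.subLeft p).tsum_eq]
  refine tsum_congr fun q => ?_
  have shift (t s : ℝ) : t - hbar * ((q - 2 * p : ℤ) : ℝ) * s =
      t + hbar * ((p + (p - q) : ℤ) : ℝ) * s := by
    push_cast
    ring
  simp only [piKernel, Equiv.subLeft_apply, _root_.sub_sub_cancel, shift]

lemma piKernel_invol (x y : ℝ) (p r : ℤ) :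
    piKernel hbar μ ν (invol Φ) x y p r = (starRingEnd ℂ) (piKernel hbar μ ν Φ x y r p) := by
  simp only [piKernel, invol, neg_sub, add_comm r p]

variable {Φ} in
lemma tsum_piRep_invol_mul_conj (hΦ : norm1 Φ ≠ ⊤) {ξ η : ℝ → ℝ → ℤ → ℂ} {x y : ℝ}
    (hξ : Summable fun p => ‖ξ x y p‖ ^ 2) (hη : Summable fun p => ‖η x y p‖ ^ 2) :
    ∑' p, piRep hbar μ ν (invol Φ) ξ x y p * (starRingEnd ℂ) (η x y p) =
      ∑' p, ξ x y p * (starRingEnd ℂ) (piRep hbar μ ν Φ η x y p) := by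
  obtain ⟨M, hM, hΦM⟩ := norm1_ne_top_iff_exists_summable.mp hΦ
  have hM_neg : Summable fun q => M (-q) := (Equiv.neg ℤ).summable_iff.mpr hM
  have hK (p r : ℤ) : ‖piKernel hbar μ ν (invol Φ) x y p r‖ ≤ M (-(p - r)) := by
    rw [piKernel_invol, RCLike.norm_conj, neg_sub]
    exact hΦM _ _ _
  have h := tsum_matrix_mul_conj_eq (summable_matrix_pairing_of_norm_le_sub hM_neg hK hξ hη)
  simpa only [piRep_eq_tsum_piKernel, piKernel_invol, Complex.conj_conj] using h

end Fibre

lemma SqInt.ae_summable_norm_sq {ξ : ℝ → ℝ → ℤ → ℂ} (hξ : SqInt ξ) :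
    ∀ᵐ x : ℝ, ∀ᵐ y ∂(volume.restrict (Set.Ico (0 : ℝ) 1)), Summable fun p => ‖ξ x y p‖ ^ 2 := by
  have hmeas : Measurable fun z : ℝ × ℝ => ∑' p : ℤ, (‖ξ z.1 z.2 p‖₊ : ℝ≥0∞) ^ 2 :=
    Measurable.tsum fun p => (hξ.1 p).nnnorm.coe_nnreal_ennreal.pow_const 2
  filter_upwards [ae_lt_top hmeas.lintegral_prod_right' hξ.2.ne] with x hx
  filter_upwards [ae_lt_top (hmeas.comp measurable_prodMk_left) hx.ne] with y hy
  simpa using ENNReal.summable_toReal hy.ne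

theorem piRep_adjoint_general (hbar μ ν : ℝ) {Φ ξ η : ℝ → ℝ → ℤ → ℂ} (hΦ : IsL1Symbol Φ)
    (hξ : SqInt ξ) (hη : SqInt η) :
    ip (piRep hbar μ ν (invol Φ) ξ) η = ip ξ (piRep hbar μ ν Φ η) := by
  refine integral_congr_ae ?_
  filter_upwards [hξ.ae_summable_norm_sq, hη.ae_summable_norm_sq] with x hξx hηx
  refine integral_congr_ae ?_
  filter_upwards [hξx, hηx] with y hξxy hηxy
  exact tsum_piRep_invol_mul_conj hbar μ ν hΦ.norm1_ne_top hξxy hηxy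

theorem piRep_adjoint (c : ℕ) (hc : 0 < c) (hbar μ ν : ℝ) (hμν : μ ^ 2 + ν ^ 2 ≠ 0)
    (Φ : ℝ → ℝ → ℤ → ℂ) (hΦ : InSc c Φ)
    (ξ η : ℝ → ℝ → ℤ → ℂ) (hξ : SqInt ξ) (hη : SqInt η) :
    ip (piRep hbar μ ν (invol Φ) ξ) η = ip ξ (piRep hbar μ ν Φ η) :=
  piRep_adjoint_general hbar μ ν hΦ.isL1Symbol hξ hη

end
end

section
/- The map δ₂ given by (δ₂Φ)(x,y,p) = 2πicpx·Φ(x,y,p) − (∂Φ/∂y)(x,y,p) is a derivation for the star product: for all Φ, Ψ ∈ S^c, δ₂(Φ ⋆ Ψ) = (δ₂Φ) ⋆ Ψ + Φ ⋆ (δ₂Ψ) as functions on ℝ × ℝ × ℤ. -/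
/-!
Each of the two summands of `δ₂` satisfies the Leibniz rule term by term in the series defining the
star product: the multiplier `p x` because `q (x - ℏ(q-p)μ) + (p-q)(x - ℏqμ) = p x`, and `∂/∂y` by
the product rule. Only convergence is at stake. The derivative `∂Φ/∂y` alone grows linearly in `x`,
but the combination `δ₂Φ` satisfies the same twisted periodicity as `Φ`, so that both `|Φ|` and
`|δ₂Φ|` are periodic and their decay in `p` on the unit square is uniform on the plane. Therefore we
solve the termwise Leibniz rule for the `y`-derivative of the `q`-th term `T_q`,
`∂T_q/∂y = 2πi c p x T_q - ((q-th term of δ₂Φ ⋆ Ψ) + (q-th term of Φ ⋆ δ₂Ψ))`,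
which is dominated by a summable sequence uniformly in `y`.
-/

open MeasureTheory ENNReal

noncomputable section

lemma summable_one_div_one_add_sq : Summable fun p : ℤ => 1 / (1 + (p : ℝ) ^ 2) := by
  refine (Real.summable_one_div_int_pow.mpr one_lt_two).of_norm_bounded_eventually ?_
  filter_upwards [Filter.eventually_cofinite_ne (0 : ℤ)] with p hp
  rw [Real.norm_of_nonneg (by positivity)]
  exact one_div_le_one_div_of_le (by positivity) (by linarith)

lemma apply_fract_fract_of_periodic {α : Type*} {f : ℝ → ℝ → α} (hx : Function.Periodic f 1)
    (hy : ∀ x, Function.Periodic (f x) 1) (x y : ℝ) :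
    f (Int.fract x) (Int.fract y) = f x y := by
  have hfx : f (Int.fract x) = f x := by simpa using hx.sub_int_mul_eq (x := x) ⌊x⌋
  have hfy : f x (Int.fract y) = f x y := by simpa using (hy x).sub_int_mul_eq (x := y) ⌊y⌋
  rw [hfx, hfy]

/-- The `q`-th term of the series defining `(F ⋆ G) x y p`. -/
def starTerm (hbar μ ν : ℝ) (F G : ℝ → ℝ → ℤ → ℂ) (x y : ℝ) (p q : ℤ) : ℂ :=
  F (x - hbar * ((q - p : ℤ) : ℝ) * μ) (y - hbar * ((q - p : ℤ) : ℝ) * ν) q *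
    G (x - hbar * (q : ℝ) * μ) (y - hbar * (q : ℝ) * ν) (p - q)

/-- The domain of `δ₂` as an unbounded operator on the functions of finite norm `‖·‖_{∞,∞,1}`:
the `y`-derivative exists, and both `Φ` and `δ₂Φ` have finite norm. -/
structure InDomD2 (c : ℕ) (Φ : ℝ → ℝ → ℤ → ℂ) : Prop where
  differentiable_y : ∀ (x : ℝ) (p : ℤ), Differentiable ℝ fun y => Φ x y p
  norm1_ne_top : norm1 Φ ≠ ⊤
  norm1_d2_ne_top : norm1 (d2 c Φ) ≠ ⊤

section Norm1

variable {F G : ℝ → ℝ → ℤ → ℂ}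

lemma norm1_ne_top_iff :
    norm1 F ≠ ⊤ ↔ ∃ u : ℤ → ℝ, Summable u ∧ ∀ (x y : ℝ) (p : ℤ), ‖F x y p‖ ≤ u p := by
  constructor
  · intro hF
    refine ⟨_, ENNReal.summable_toReal hF, fun x y p => ?_⟩
    have hle : (‖F x y p‖₊ : ℝ≥0∞) ≤ ⨆ x : ℝ, ⨆ y : ℝ, (‖F x y p‖₊ : ℝ≥0∞) :=
      le_iSup₂ (f := fun x y => (‖F x y p‖₊ : ℝ≥0∞)) x y
    exact ENNReal.toReal_mono (ENNReal.ne_top_of_tsum_ne_top hF p) hle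
  · rintro ⟨u, hu, hFu⟩
    refine ne_top_of_le_ne_top hu.tsum_ofReal_ne_top (ENNReal.tsum_le_tsum fun p => ?_)
    refine iSup₂_le fun x y => ?_
    rw [← enorm_eq_nnnorm, ← ofReal_norm]
    exact ENNReal.ofReal_le_ofReal (hFu x y p)

lemma exists_summable_norm_starTerm_le (hF : norm1 F ≠ ⊤) (hG : norm1 G ≠ ⊤) (hbar μ ν : ℝ) :
    ∃ u : ℤ → ℝ, Summable u ∧
      ∀ (x y : ℝ) (p q : ℤ), ‖starTerm hbar μ ν F G x y p q‖ ≤ u q := by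
  obtain ⟨v, hv, hFv⟩ := norm1_ne_top_iff.mp hF
  obtain ⟨w, hw, hGw⟩ := norm1_ne_top_iff.mp hG
  have hw_le (n : ℤ) : w n ≤ ∑' m, w m :=
    hw.le_tsum n fun m _ => (norm_nonneg _).trans (hGw 0 0 m)
  refine ⟨fun q => v q * ∑' m, w m, hv.mul_right _, fun x y p q => ?_⟩
  rw [starTerm, norm_mul]
  exact mul_le_mul (hFv _ _ q) ((hGw _ _ _).trans (hw_le _)) (norm_nonneg _)
    ((norm_nonneg _).trans (hFv 0 0 q))

lemma norm1_ne_top_of_periodic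
    (hx : ∀ (x y : ℝ) (p : ℤ), ‖F (x + 1) y p‖ = ‖F x y p‖)
    (hy : ∀ (x y : ℝ) (p : ℤ), ‖F x (y + 1) p‖ = ‖F x y p‖) {C : ℝ}
    (hC : ∀ x ∈ Set.Icc (0 : ℝ) 1, ∀ y ∈ Set.Icc (0 : ℝ) 1, ∀ p : ℤ,
      (1 + (p : ℝ) ^ 2) * ‖F x y p‖ ≤ C) :
    norm1 F ≠ ⊤ := by
  refine norm1_ne_top_iff.mpr
    ⟨fun p => C * (1 / (1 + (p : ℝ) ^ 2)), summable_one_div_one_add_sq.mul_left C, fun x y p => ?_⟩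
  have hfract : ‖F (Int.fract x) (Int.fract y) p‖ = ‖F x y p‖ :=
    apply_fract_fract_of_periodic (f := fun x y => ‖F x y p‖) (fun x => funext fun y => hx x y p)
      (fun x y => hy x y p) x y
  have hmem (t : ℝ) : Int.fract t ∈ Set.Icc (0 : ℝ) 1 :=
    ⟨Int.fract_nonneg t, (Int.fract_lt_one t).le⟩
  beta_reduce
  rw [mul_one_div, le_div_iff₀' (by positivity), ← hfract]
  exact hC _ (hmem x) _ (hmem y) p

end Norm1

section Leibniz

variable {Φ Ψ : ℝ → ℝ → ℤ → ℂ}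

lemma hasDerivAt_starTerm (c : ℕ) (hΦ : ∀ (x : ℝ) (p : ℤ), Differentiable ℝ fun y => Φ x y p)
    (hΨ : ∀ (x : ℝ) (p : ℤ), Differentiable ℝ fun y => Ψ x y p) (hbar μ ν x y : ℝ) (p q : ℤ) :
    HasDerivAt (fun y' => starTerm hbar μ ν Φ Ψ x y' p q)
      (2 * Real.pi * Complex.I * (c : ℂ) * (p : ℂ) * (x : ℂ) * starTerm hbar μ ν Φ Ψ x y p q -
        (starTerm hbar μ ν (d2 c Φ) Ψ x y p q + starTerm hbar μ ν Φ (d2 c Ψ) x y p q)) y := by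
  have hΦ' := (hΦ (x - hbar * ((q - p : ℤ) : ℝ) * μ) q _).hasDerivAt.comp_sub_const y
    (hbar * ((q - p : ℤ) : ℝ) * ν)
  have hΨ' := (hΨ (x - hbar * (q : ℝ) * μ) (p - q) _).hasDerivAt.comp_sub_const y
    (hbar * (q : ℝ) * ν)
  refine (hΦ'.mul hΨ').congr_deriv ?_
  simp only [starTerm, d2]
  push_cast
  ring

variable {c : ℕ}

lemma hasDerivAt_starProd (hΦ : InDomD2 c Φ) (hΨ : InDomD2 c Ψ) (hbar μ ν x y : ℝ) (p : ℤ) :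
    HasDerivAt (fun y' => starProd hbar μ ν Φ Ψ x y' p)
      (2 * Real.pi * Complex.I * (c : ℂ) * (p : ℂ) * (x : ℂ) * starProd hbar μ ν Φ Ψ x y p -
        (starProd hbar μ ν (d2 c Φ) Ψ x y p + starProd hbar μ ν Φ (d2 c Ψ) x y p)) y := by
  set m : ℂ := 2 * Real.pi * Complex.I * (c : ℂ) * (p : ℂ) * (x : ℂ) with hm
  obtain ⟨u, hu, hu_le⟩ :=
    exists_summable_norm_starTerm_le hΦ.norm1_ne_top hΨ.norm1_ne_top hbar μ ν
  obtain ⟨v, hv, hv_le⟩ :=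
    exists_summable_norm_starTerm_le hΦ.norm1_d2_ne_top hΨ.norm1_ne_top hbar μ ν
  obtain ⟨w, hw, hw_le⟩ :=
    exists_summable_norm_starTerm_le hΦ.norm1_ne_top hΨ.norm1_d2_ne_top hbar μ ν
  have hsum : Summable (starTerm hbar μ ν Φ Ψ x y p) := .of_norm_bounded hu (hu_le x y p)
  have hsum_left : Summable (starTerm hbar μ ν (d2 c Φ) Ψ x y p) :=
    .of_norm_bounded hv (hv_le x y p)
  have hsum_right : Summable (starTerm hbar μ ν Φ (d2 c Ψ) x y p) :=
    .of_norm_bounded hw (hw_le x y p)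
  have hbound (q : ℤ) (y' : ℝ) : ‖m * starTerm hbar μ ν Φ Ψ x y' p q -
      (starTerm hbar μ ν (d2 c Φ) Ψ x y' p q + starTerm hbar μ ν Φ (d2 c Ψ) x y' p q)‖ ≤
      ‖m‖ * u q + (v q + w q) := by
    refine norm_sub_le_of_le ?_ (norm_add_le_of_le (hv_le x y' p q) (hw_le x y' p q))
    rw [norm_mul]
    gcongr
    exact hu_le x y' p q
  refine (hasDerivAt_tsum ((hu.mul_left ‖m‖).add (hv.add hw))
    (fun q y' => hasDerivAt_starTerm c hΦ.differentiable_y hΨ.differentiable_y hbar μ ν x y' p q)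
    hbound hsum y).congr_deriv ?_
  rw [← hm, (hsum.mul_left m).tsum_sub (hsum_left.add hsum_right), hsum.tsum_mul_left,
    hsum_left.tsum_add hsum_right]
  rfl

theorem d2_derivation_general (hΦ : InDomD2 c Φ) (hΨ : InDomD2 c Ψ) (hbar μ ν x y : ℝ) (p : ℤ) :
    d2 c (starProd hbar μ ν Φ Ψ) x y p =
      starProd hbar μ ν (d2 c Φ) Ψ x y p + starProd hbar μ ν Φ (d2 c Ψ) x y p := by
  rw [d2, (hasDerivAt_starProd hΦ hΨ hbar μ ν x y p).deriv, _root_.sub_sub_cancel]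

end Leibniz

lemma norm_twist (c : ℕ) (k p : ℤ) (y : ℝ) :
    ‖Complex.exp (2 * Real.pi * Complex.I * ((c : ℂ) * (k : ℂ) * (p : ℂ) * (y : ℂ)))‖ = 1 := by
  simp [Complex.norm_exp]

namespace InSc

variable {c : ℕ} {Φ : ℝ → ℝ → ℤ → ℂ}

lemma differentiable_y (h : InSc c Φ) (x : ℝ) (p : ℤ) : Differentiable ℝ fun y => Φ x y p :=
  ((h.smooth p).differentiable (by simp)).comp
    ((differentiable_const x).prodMk differentiable_id)

lemma d2_periodic_y (h : InSc c Φ) (x y : ℝ) (p : ℤ) : d2 c Φ x (y + 1) p = d2 c Φ x y p := by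
  simp only [d2, ← deriv_comp_add_const, h.periodic_y]

-- Differentiating the factor `e(ckpy)` yields `2πi c k p`, which the shift of `x` by `k` cancels.
lemma d2_twisted (h : InSc c Φ) (k : ℤ) (x y : ℝ) (p : ℤ) :
    d2 c Φ (x + k) y p =
      Complex.exp (2 * Real.pi * Complex.I * ((c : ℂ) * (k : ℂ) * (p : ℂ) * (y : ℂ))) *
        d2 c Φ x y p := by
  have hlin : HasDerivAt
      (fun y' : ℝ => 2 * Real.pi * Complex.I * ((c : ℂ) * (k : ℂ) * (p : ℂ) * (y' : ℂ)))
      (2 * Real.pi * Complex.I * ((c : ℂ) * (k : ℂ) * (p : ℂ))) y := by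
    simpa using ((hasDerivAt_id y).ofReal_comp.const_mul ((c : ℂ) * k * p)).const_mul
      (2 * Real.pi * Complex.I)
  have hderiv := (hlin.cexp.mul (h.differentiable_y x p y).hasDerivAt).deriv
  simp only [Pi.mul_def] at hderiv
  simp only [d2, h.twisted, hderiv]
  push_cast
  ring

lemma norm_add_one (h : InSc c Φ) (x y : ℝ) (p : ℤ) : ‖Φ (x + 1) y p‖ = ‖Φ x y p‖ := by
  rw [← Int.cast_one, h.twisted, norm_mul, norm_twist, one_mul]

lemma norm_d2_add_one (h : InSc c Φ) (x y : ℝ) (p : ℤ) :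
    ‖d2 c Φ (x + 1) y p‖ = ‖d2 c Φ x y p‖ := by
  rw [← Int.cast_one, h.d2_twisted, norm_mul, norm_twist, one_mul]

lemma exists_iteratedDeriv_bound (h : InSc c Φ) (P : Polynomial ℤ) (n : ℕ) :
    ∃ C : ℝ, ∀ x ∈ Set.Icc (0 : ℝ) 1, ∀ y ∈ Set.Icc (0 : ℝ) 1, ∀ p : ℤ,
      |((P.eval p : ℤ) : ℝ)| * ‖iteratedDeriv n (fun y' => Φ x y' p) y‖ ≤ C := by
  obtain ⟨C, hC⟩ := h.poly_bounded P 0 n _ (isCompact_Icc.prod isCompact_Icc)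
  exact ⟨C, fun x hx y hy p => by simpa only [iteratedDeriv_zero] using hC x y p ⟨hx, hy⟩⟩

lemma norm1_ne_top (h : InSc c Φ) : norm1 Φ ≠ ⊤ := by
  obtain ⟨C, hC⟩ := h.exists_iteratedDeriv_bound (1 + Polynomial.X ^ 2) 0
  refine norm1_ne_top_of_periodic h.norm_add_one
    (fun x y p => by rw [h.periodic_y]) (C := C) fun x hx y hy p => ?_
  have hp : |1 + (p : ℝ) ^ 2| = 1 + (p : ℝ) ^ 2 := abs_of_pos (by positivity)
  simpa [hp] using hC x hx y hy p

lemma exists_d2_bound (h : InSc c Φ) :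
    ∃ C : ℝ, ∀ x ∈ Set.Icc (0 : ℝ) 1, ∀ y ∈ Set.Icc (0 : ℝ) 1, ∀ p : ℤ,
      (1 + (p : ℝ) ^ 2) * ‖d2 c Φ x y p‖ ≤ C := by
  obtain ⟨C, hC⟩ := h.exists_iteratedDeriv_bound ((1 + Polynomial.X ^ 2) * Polynomial.X) 0
  obtain ⟨D, hD⟩ := h.exists_iteratedDeriv_bound (1 + Polynomial.X ^ 2) 1
  refine ⟨2 * Real.pi * c * C + D, fun x hx y hy p => ?_⟩
  have hp : |1 + (p : ℝ) ^ 2| = 1 + (p : ℝ) ^ 2 := abs_of_pos (by positivity)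
  have hΦ : (1 + (p : ℝ) ^ 2) * |(p : ℝ)| * ‖Φ x y p‖ ≤ C := by
    simpa [hp, abs_mul] using hC x hx y hy p
  have hderiv : (1 + (p : ℝ) ^ 2) * ‖deriv (fun y' => Φ x y' p) y‖ ≤ D := by
    simpa [hp] using hD x hx y hy p
  have hmul : ‖2 * Real.pi * Complex.I * (c : ℂ) * (p : ℂ) * (x : ℂ) * Φ x y p‖ ≤
      2 * Real.pi * c * (|(p : ℝ)| * ‖Φ x y p‖) := by
    calc ‖2 * Real.pi * Complex.I * (c : ℂ) * (p : ℂ) * (x : ℂ) * Φ x y p‖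
        = 2 * Real.pi * c * (|(p : ℝ)| * ‖Φ x y p‖) * x := by
          simp only [norm_mul, Complex.norm_I, Complex.norm_real, Complex.norm_natCast,
            Complex.norm_intCast, Complex.norm_ofNat, Real.norm_eq_abs,
            abs_of_pos Real.pi_pos, abs_of_nonneg hx.1]
          ring
      _ ≤ 2 * Real.pi * c * (|(p : ℝ)| * ‖Φ x y p‖) :=
          mul_le_of_le_one_right (by positivity) hx.2
  calc (1 + (p : ℝ) ^ 2) * ‖d2 c Φ x y p‖
      ≤ (1 + (p : ℝ) ^ 2) *
          (2 * Real.pi * c * (|(p : ℝ)| * ‖Φ x y p‖) + ‖deriv (fun y' => Φ x y' p) y‖) := by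
        gcongr
        exact norm_sub_le_of_le hmul le_rfl
    _ = 2 * Real.pi * c * ((1 + (p : ℝ) ^ 2) * |(p : ℝ)| * ‖Φ x y p‖) +
          (1 + (p : ℝ) ^ 2) * ‖deriv (fun y' => Φ x y' p) y‖ := by ring
    _ ≤ 2 * Real.pi * c * C + D := by gcongr

lemma inDomD2 (h : InSc c Φ) : InDomD2 c Φ where
  differentiable_y := h.differentiable_y
  norm1_ne_top := h.norm1_ne_top
  norm1_d2_ne_top :=
    let ⟨_, hC⟩ := h.exists_d2_bound
    norm1_ne_top_of_periodic h.norm_d2_add_one (fun x y p => by rw [h.d2_periodic_y]) hC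

end InSc

theorem d2_derivation (c : ℕ) (hc : 0 < c) (hbar μ ν : ℝ) (hμν : μ ^ 2 + ν ^ 2 ≠ 0)
    (Φ Ψ : ℝ → ℝ → ℤ → ℂ) (hΦ : InSc c Φ) (hΨ : InSc c Ψ) :
    ∀ (x y : ℝ) (p : ℤ),
      d2 c (starProd hbar μ ν Φ Ψ) x y p =
      starProd hbar μ ν (d2 c Φ) Ψ x y p + starProd hbar μ ν Φ (d2 c Ψ) x y p :=
  d2_derivation_general hΦ.inDomD2 hΨ.inDomD2 hbar μ ν

end
end
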